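/- arXiv:2308.08983 — 4 statements merged into one kernel-verified Lean document; each statement's English description precedes it below -/
import Mathlib

section
/- For every labeled P/T Petri net N = (S, A, T), if R1 and R2 are structure-preserving bisimulations on N, then their relational composition R1 ∘ R2 = ⋃_{l1 ∈ R1, l2 ∈ R2} (l1 ∘ l2) is a structure-preserving bisimulation on N. -/
/-- A labeled P/T Petri net over the (countable) type `S` of places and the
(finite) type `A` of labels: a countable set of transitions, each consisting
of a nonempty finite multiset over `S` (the preset), a label in `A`, and a
finite multiset over `S` (the postset).  Markings are finite multisets over `S`. -/
structure PetriNet (S A : Type) where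
  T : Set (Multiset S × A × Multiset S)
  countable_T : T.Countable
  pre_nonempty : ∀ t ∈ T, t.1 ≠ 0

namespace PetriNet

variable {S A : Type} [DecidableEq S]

/-- First projection of a linking: `π1(l)(s1) = Σ_{s2} l(s1,s2)`. -/
def pi1 (l : Multiset (S × S)) : Multiset S := l.map Prod.fst

/-- Second projection of a linking: `π2(l)(s2) = Σ_{s1} l(s1,s2)`. -/
def pi2 (l : Multiset (S × S)) : Multiset S := l.map Prod.snd

/-- A structure-preserving bisimulation on a net: a set `R` of linkings such
that every `l ∈ R` and every `c ⊆ l` satisfy the two transfer properties. -/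
def IsSPBisim (N : PetriNet S A) (R : Set (Multiset (S × S))) : Prop :=
  ∀ l ∈ R, ∀ c ≤ l,
    (∀ t1 ∈ N.T, t1.1 = pi1 c →
      ∃ t2 ∈ N.T, t2.2.1 = t1.2.1 ∧ t2.1 = pi2 c ∧
        ∃ cb : Multiset (S × S),
          pi1 cb = t1.2.2 ∧ pi2 cb = t2.2.2 ∧ l - c + cb ∈ R) ∧
    (∀ t2 ∈ N.T, t2.1 = pi2 c →
      ∃ t1 ∈ N.T, t1.2.1 = t2.2.1 ∧ t1.1 = pi1 c ∧
        ∃ cb : Multiset (S × S),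
          pi1 cb = t1.2.2 ∧ pi2 cb = t2.2.2 ∧ l - c + cb ∈ R)

/-- Structure-preserving bisimilarity of markings. -/
def SPBisimilar (N : PetriNet S A) (m1 m2 : Multiset S) : Prop :=
  ∃ R, N.IsSPBisim R ∧ ∃ l ∈ R, pi1 l = m1 ∧ pi2 l = m2

end PetriNet

namespace PetriNet

/-- Relational composition of two linkings: `h ∈ l1 ∘ l2` iff there is a
finite multiset `k` of triples of places with
`l1(s1,s2) = Σ_{s3} k(s1,s2,s3)`, `l2(s2,s3) = Σ_{s1} k(s1,s2,s3)` and
`h(s1,s3) = Σ_{s2} k(s1,s2,s3)`. -/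
def linkComp {S : Type} (l1 l2 : Multiset (S × S)) : Set (Multiset (S × S)) :=
  { h | ∃ k : Multiset (S × S × S),
      l1 = k.map (fun x => (x.1, x.2.1)) ∧
      l2 = k.map (fun x => (x.2.1, x.2.2)) ∧
      h = k.map (fun x => (x.1, x.2.2)) }

end PetriNet

/-!
A multiset of triples witnessing `h ∈ l1 ∘ l2` splits along any splitting of `h`, so a sublinking
`c` of `h` comes with sublinkings `c1`, `c2` of `l1`, `l2` such that `c ∈ c1 ∘ c2`, and the
remainders stay composable. A transition with preset `π1(c) = π1(c1)` is matched through `c1` and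
then, since `π2(c1) = π1(c2)`, through `c2`. The two replacement linkings agree on the postset of
the intermediate transition; linkings sharing their middle marking always have a composite, and
adding it to the composite of the remainders closes the diagram.
-/

theorem multiset_map_eq_add_iff {α β : Type*} {f : α → β} {s : Multiset α} {t u : Multiset β} :
    s.map f = t + u ↔ ∃ s₁ s₂, s₁.map f = t ∧ s₂.map f = u ∧ s = s₁ + s₂ := by
  rw [← Multiset.rel_eq, Multiset.rel_map_left, Multiset.rel_add_right]
  simp only [← Multiset.rel_map_left (r := Eq) (f := f), Multiset.rel_eq]

theorem exists_multiset_map_eq_of_map_snd_eq_map_fst {α β γ : Type*} {s : Multiset (α × β)}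
    {t : Multiset (β × γ)} (hst : s.map Prod.snd = t.map Prod.fst) :
    ∃ k : Multiset (α × β × γ),
      s = k.map (fun x => (x.1, x.2.1)) ∧ t = k.map (fun x => (x.2.1, x.2.2)) := by
  have hrel : Multiset.Rel (fun p q => p.2 = q.1) s t :=
    Multiset.rel_map.1 (Multiset.rel_eq.2 hst)
  clear hst
  induction hrel with
  | zero => exact ⟨0, rfl, rfl⟩
  | @cons p q _ _ hpq _ ih =>
    obtain ⟨k, rfl, rfl⟩ := ih
    exact ⟨(p.1, p.2, q.2) ::ₘ k, by simp, by simp [hpq]⟩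

namespace PetriNet

variable {S : Type} {c h l1 l2 r : Multiset (S × S)}

theorem pi1_eq_of_mem_linkComp (hh : h ∈ linkComp l1 l2) : pi1 h = pi1 l1 := by
  obtain ⟨k, rfl, rfl, rfl⟩ := hh
  simp [pi1]

theorem pi2_eq_of_mem_linkComp (hh : h ∈ linkComp l1 l2) : pi2 h = pi2 l2 := by
  obtain ⟨k, rfl, rfl, rfl⟩ := hh
  simp [pi2]

theorem linkComp_nonempty_iff : (linkComp l1 l2).Nonempty ↔ pi2 l1 = pi1 l2 := by
  constructor
  · rintro ⟨_, k, rfl, rfl, rfl⟩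
    simp [pi1, pi2]
  · intro hmid
    obtain ⟨k, hk1, hk2⟩ := exists_multiset_map_eq_of_map_snd_eq_map_fst hmid
    exact ⟨_, k, hk1, hk2, rfl⟩

theorem add_mem_linkComp {c1 c2 r1 r2 : Multiset (S × S)} (hc : c ∈ linkComp c1 c2)
    (hr : r ∈ linkComp r1 r2) : c + r ∈ linkComp (c1 + r1) (c2 + r2) := by
  obtain ⟨k, rfl, rfl, rfl⟩ := hc
  obtain ⟨k', rfl, rfl, rfl⟩ := hr
  exact ⟨k + k', by simp, by simp, by simp⟩

theorem exists_add_of_add_mem_linkComp (hcr : c + r ∈ linkComp l1 l2) :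
    ∃ c1 r1 c2 r2, l1 = c1 + r1 ∧ l2 = c2 + r2 ∧ c ∈ linkComp c1 c2 ∧ r ∈ linkComp r1 r2 := by
  obtain ⟨k, rfl, rfl, hk⟩ := hcr
  obtain ⟨kc, kr, rfl, rfl, rfl⟩ := multiset_map_eq_add_iff.1 hk.symm
  exact ⟨_, _, _, _, Multiset.map_add .., Multiset.map_add .., ⟨kc, rfl, rfl, rfl⟩,
    ⟨kr, rfl, rfl, rfl⟩⟩

theorem exists_add_mem_linkComp {r1 r2 d1 d2 : Multiset (S × S)} (hr : r ∈ linkComp r1 r2)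
    (hmid : pi2 d1 = pi1 d2) :
    ∃ d, pi1 d = pi1 d1 ∧ pi2 d = pi2 d2 ∧ r + d ∈ linkComp (r1 + d1) (r2 + d2) := by
  obtain ⟨d, hd⟩ := linkComp_nonempty_iff.2 hmid
  exact ⟨d, pi1_eq_of_mem_linkComp hd, pi2_eq_of_mem_linkComp hd, add_mem_linkComp hr hd⟩

end PetriNet

open PetriNet in
theorem comp_isSPBisim_general {S A : Type} [DecidableEq S] {N : PetriNet S A}
    {R1 R2 : Set (Multiset (S × S))} (h1 : N.IsSPBisim R1) (h2 : N.IsSPBisim R2) :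
    N.IsSPBisim {h | ∃ l1 ∈ R1, ∃ l2 ∈ R2, h ∈ linkComp l1 l2} := by
  rintro _ ⟨l1, hl1, l2, hl2, hh⟩ c hc
  obtain ⟨r, rfl⟩ := exists_add_of_le hc
  obtain ⟨c1, r1, c2, r2, rfl, rfl, hc12, hr12⟩ := exists_add_of_add_mem_linkComp hh
  have transfer1 := h1 _ hl1 c1 (Multiset.le_add_right c1 r1)
  have transfer2 := h2 _ hl2 c2 (Multiset.le_add_right c2 r2)
  have hmid : pi2 c1 = pi1 c2 := linkComp_nonempty_iff.1 ⟨c, hc12⟩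
  simp only [add_tsub_cancel_left, pi1_eq_of_mem_linkComp hc12,
    pi2_eq_of_mem_linkComp hc12] at transfer1 transfer2 ⊢
  constructor
  · intro t1 ht1 hpre1
    obtain ⟨t2, ht2, hlab12, hpre2, d1, hd1, hd1', hR1⟩ := transfer1.1 t1 ht1 hpre1
    obtain ⟨t3, ht3, hlab23, hpre3, d2, hd2, hd2', hR2⟩ := transfer2.1 t2 ht2 (hpre2.trans hmid)
    obtain ⟨d, hd, hd', hmem⟩ := exists_add_mem_linkComp hr12 (hd1'.trans hd2.symm)
    exact ⟨t3, ht3, hlab23.trans hlab12, hpre3, d, hd.trans hd1, hd'.trans hd2',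
      _, hR1, _, hR2, hmem⟩
  · intro t3 ht3 hpre3
    obtain ⟨t2, ht2, hlab23, hpre2, d2, hd2, hd2', hR2⟩ := transfer2.2 t3 ht3 hpre3
    obtain ⟨t1, ht1, hlab12, hpre1, d1, hd1, hd1', hR1⟩ :=
      transfer1.2 t2 ht2 (hpre2.trans hmid.symm)
    obtain ⟨d, hd, hd', hmem⟩ := exists_add_mem_linkComp hr12 (hd1'.trans hd2.symm)
    exact ⟨t1, ht1, hlab12.trans hlab23, hpre1, d, hd.trans hd1, hd'.trans hd2',
      _, hR1, _, hR2, hmem⟩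

/-- the relational composition `R1 ∘ R2 = ⋃_{l1∈R1, l2∈R2} l1 ∘ l2`
of two structure-preserving bisimulations is a structure-preserving
bisimulation. -/
theorem comp_isSPBisim {S A : Type} [DecidableEq S] [Countable S] [Finite A]
    (N : PetriNet S A) (R1 R2 : Set (Multiset (S × S)))
    (h1 : N.IsSPBisim R1) (h2 : N.IsSPBisim R2) :
    N.IsSPBisim {h | ∃ l1 ∈ R1, ∃ l2 ∈ R2, h ∈ PetriNet.linkComp l1 l2} :=
  comp_isSPBisim_general h1 h2
end

section
/- For every labeled P/T Petri net N = (S, A, T): (i) the union of all structure-preserving bisimulations on N is itself a structure-preserving bisimulation (hence the largest one), and (ii) the relation ~sp on markings (structure-preserving bisimilarity) is an equivalence relation. -/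
/-!
Phrased for a decomposition `r + c` of a linking rather than for a pair `c ≤ l`, the transfer
property involves no subtraction, and a set of linkings is an sp-bisimulation iff both it and its
converse have the forward transfer property. That property is preserved by unions, holds for the
linkings that relate each place only to itself, and is preserved by composition: two linkings that
agree on the middle marking are glued along it into a multiset of triples. The triples are kept as
witnesses because a composite linking alone does not determine which middle token each of its links
passes through.
-/

section Multiset

variable {α β γ : Type*}

theorem multiset_map_eq_add_iff_s4 {f : α → β} {k : Multiset α} {r c : Multiset β} :
    k.map f = r + c ↔ ∃ r' c', r'.map f = r ∧ c'.map f = c ∧ k = r' + c' := by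
  rw [← Multiset.rel_eq, Multiset.rel_map_left, Multiset.rel_add_right]
  simp only [← Multiset.rel_map_left, Multiset.rel_eq]

theorem exists_triples_of_map_snd_eq_map_fst {l₁ : Multiset (α × β)} {l₂ : Multiset (β × γ)}
    (h : l₁.map Prod.snd = l₂.map Prod.fst) :
    ∃ k : Multiset (α × β × γ), k.map (fun p ↦ (p.1, p.2.1)) = l₁ ∧ k.map Prod.snd = l₂ := by
  have hrel : Multiset.Rel (fun p q ↦ p.2 = q.1) l₁ l₂ :=
    Multiset.rel_map.1 (Multiset.rel_eq.2 h)
  clear h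
  induction hrel with
  | zero => exact ⟨0, rfl, rfl⟩
  | @cons p q _ _ hpq _ ih =>
    obtain ⟨k, rfl, rfl⟩ := ih
    exact ⟨(p.1, q) ::ₘ k, by simp [← hpq], by simp⟩

end Multiset

namespace PetriNet

variable {S A : Type}

section Linking

theorem pi1_map_swap (l : Multiset (S × S)) : pi1 (l.map Prod.swap) = pi2 l := by
  simp [pi1, pi2]

theorem pi2_map_swap (l : Multiset (S × S)) : pi2 (l.map Prod.swap) = pi1 l := by
  simp [pi1, pi2]

/-- The converse of a set of linkings, obtained by reversing every link. -/
def converse (R : Set (Multiset (S × S))) : Set (Multiset (S × S)) :=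
  {l | l.map Prod.swap ∈ R}

/-- The linkings that relate each place only to itself, the witnesses of the reflexivity of
sp-bisimilarity. -/
def diagonalLinkings (S : Type) : Set (Multiset (S × S)) :=
  {l | ∀ p ∈ l, p.1 = p.2}

/-- The composition of two sets of linkings, used for the transitivity of sp-bisimilarity. A
composite linking is the outer projection of a multiset of triples whose two inner projections lie
in `R` and `Q`. -/
def comp (R Q : Set (Multiset (S × S))) : Set (Multiset (S × S)) :=
  {l | ∃ k : Multiset (S × S × S), k.map (fun p ↦ (p.1, p.2.1)) ∈ R ∧ k.map Prod.snd ∈ Q ∧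
    k.map (fun p ↦ (p.1, p.2.2)) = l}

theorem converse_converse (R : Set (Multiset (S × S))) : converse (converse R) = R := by
  simp [converse]

theorem map_swap_mem_converse {R : Set (Multiset (S × S))} {l : Multiset (S × S)} :
    l.map Prod.swap ∈ converse R ↔ l ∈ R := by
  simp [converse]

theorem converse_sUnion (𝓡 : Set (Set (Multiset (S × S)))) :
    converse (⋃₀ 𝓡) = ⋃₀ (converse '' 𝓡) := by
  simp only [Set.sUnion_image]
  exact Set.preimage_sUnion

theorem converse_diagonalLinkings : converse (diagonalLinkings S) = diagonalLinkings S := by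
  ext l
  simp only [converse, diagonalLinkings, Set.mem_ofPred_eq, Multiset.forall_mem_map_iff,
    Prod.fst_swap, Prod.snd_swap, eq_comm]

theorem converse_comp_subset (R Q : Set (Multiset (S × S))) :
    converse (comp R Q) ⊆ comp (converse Q) (converse R) := by
  rintro l ⟨k, hR, hQ, hk⟩
  refine ⟨k.map fun p ↦ (p.2.2, p.2.1, p.1), ?_, ?_, ?_⟩
  · simpa [converse, Function.comp_def] using hQ
  · simpa [converse, Function.comp_def] using hR
  · simpa [Function.comp_def] using congrArg (Multiset.map Prod.swap) hk

theorem converse_comp (R Q : Set (Multiset (S × S))) :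
    converse (comp R Q) = comp (converse Q) (converse R) := by
  refine (converse_comp_subset R Q).antisymm fun l hl ↦ ?_
  have h := converse_comp_subset (converse Q) (converse R) (map_swap_mem_converse.2 hl)
  rwa [converse_converse, converse_converse] at h

theorem exists_mem_comp {R Q : Set (Multiset (S × S))} {l₁ l₂ : Multiset (S × S)}
    (h₁ : l₁ ∈ R) (h₂ : l₂ ∈ Q) (h : pi2 l₁ = pi1 l₂) :
    ∃ l ∈ comp R Q, pi1 l = pi1 l₁ ∧ pi2 l = pi2 l₂ := by
  obtain ⟨k, rfl, rfl⟩ := exists_triples_of_map_snd_eq_map_fst h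
  exact ⟨_, ⟨k, h₁, h₂, rfl⟩, by simp [pi1], by simp [pi2]⟩

end Linking

section Simulation

variable {N : PetriNet S A}

/-- A structure-preserving simulation: a set of linkings with the forward half of the transfer
property of `IsSPBisim`. The linking is given as `r + c`, where `c` is the part consumed by the
transition. -/
def IsSPSim (N : PetriNet S A) (R : Set (Multiset (S × S))) : Prop :=
  ∀ r c, r + c ∈ R → ∀ t ∈ N.T, t.1 = pi1 c →
    ∃ u ∈ N.T, u.2.1 = t.2.1 ∧ u.1 = pi2 c ∧
      ∃ cb, pi1 cb = t.2.2 ∧ pi2 cb = u.2.2 ∧ r + cb ∈ R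

theorem isSPSim_converse_iff {R : Set (Multiset (S × S))} :
    N.IsSPSim (converse R) ↔ ∀ r c, r + c ∈ R → ∀ u ∈ N.T, u.1 = pi2 c →
      ∃ t ∈ N.T, t.2.1 = u.2.1 ∧ t.1 = pi1 c ∧
        ∃ cb, pi1 cb = t.2.2 ∧ pi2 cb = u.2.2 ∧ r + cb ∈ R := by
  have hswap : Function.Surjective (Multiset.map (Prod.swap : S × S → S × S)) := fun l ↦
    ⟨l.map Prod.swap, by simp⟩
  refine hswap.forall₂.trans (forall₂_congr fun r c ↦ ?_)
  simp only [← Multiset.map_add, map_swap_mem_converse, pi1_map_swap, pi2_map_swap]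
  refine forall₄_congr fun _ u _ _ ↦ exists_congr fun t ↦ and_congr_right' <|
    and_congr_right' <| and_congr_right' <| hswap.exists.trans <| exists_congr fun cb ↦ ?_
  rw [← Multiset.map_add, map_swap_mem_converse, pi1_map_swap, pi2_map_swap, and_left_comm]

theorem IsSPSim.sUnion {𝓡 : Set (Set (Multiset (S × S)))} (h𝓡 : ∀ R ∈ 𝓡, N.IsSPSim R) :
    N.IsSPSim (⋃₀ 𝓡) := by
  rintro r c ⟨R, hR, hrc⟩ t ht htc
  obtain ⟨u, hu, hlabel, hpre, cb, hcb₁, hcb₂, hmem⟩ := h𝓡 R hR r c hrc t ht htc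
  exact ⟨u, hu, hlabel, hpre, cb, hcb₁, hcb₂, R, hR, hmem⟩

theorem isSPSim_diagonalLinkings : N.IsSPSim (diagonalLinkings S) := by
  intro r c hrc t ht htc
  have hr : r ∈ diagonalLinkings S := fun p hp ↦ hrc p (Multiset.mem_add.2 (.inl hp))
  have hc : pi1 c = pi2 c :=
    Multiset.map_congr rfl fun p hp ↦ hrc p (Multiset.mem_add.2 (.inr hp))
  refine ⟨t, ht, rfl, htc.trans hc, t.2.2.map fun s ↦ (s, s), by simp [pi1], by simp [pi2], ?_⟩
  intro p hp
  rcases Multiset.mem_add.1 hp with hp | hp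
  · exact hr p hp
  · obtain ⟨s, -, rfl⟩ := Multiset.mem_map.1 hp
    rfl

theorem IsSPSim.comp {R Q : Set (Multiset (S × S))} (hR : N.IsSPSim R) (hQ : N.IsSPSim Q) :
    N.IsSPSim (comp R Q) := by
  rintro r c ⟨k, hkR, hkQ, hk⟩ t ht htc
  obtain ⟨r, c, rfl, rfl, rfl⟩ := multiset_map_eq_add_iff_s4.1 hk
  rw [Multiset.map_add] at hkR hkQ
  obtain ⟨u, hu, hlabel_tu, hpre_u, cb₁, hcb_t, hcb_u, hmemR⟩ :=
    hR _ _ hkR t ht (by simpa [pi1] using htc)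
  obtain ⟨v, hv, hlabel_uv, hpre_v, cb₂, hcb_u', hcb_v, hmemQ⟩ :=
    hQ _ _ hkQ u hu (by simpa [pi1, pi2] using hpre_u)
  obtain ⟨kb, rfl, rfl⟩ := exists_triples_of_map_snd_eq_map_fst (hcb_u.trans hcb_u'.symm)
  refine ⟨v, hv, hlabel_uv.trans hlabel_tu, by simpa [pi2] using hpre_v,
    kb.map fun p ↦ (p.1, p.2.2), by simpa [pi1] using hcb_t, by simpa [pi2] using hcb_v,
    r + kb, ?_, ?_, Multiset.map_add _ _ _⟩
  · rwa [Multiset.map_add]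
  · rwa [Multiset.map_add]

end Simulation

section Bisimulation

variable [DecidableEq S] {N : PetriNet S A} {R Q : Set (Multiset (S × S))}

theorem isSPBisim_iff : N.IsSPBisim R ↔ N.IsSPSim R ∧ N.IsSPSim (converse R) := by
  rw [isSPSim_converse_iff]
  constructor
  · intro hR
    have transfer := fun r c hrc ↦ hR (r + c) hrc c (Multiset.le_add_left c r)
    simp only [add_tsub_cancel_right] at transfer
    exact ⟨fun r c hrc ↦ (transfer r c hrc).1, fun r c hrc ↦ (transfer r c hrc).2⟩
  · rintro ⟨hfwd, hbwd⟩ l hl c hc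
    rw [← tsub_add_cancel_of_le hc] at hl
    exact ⟨hfwd _ c hl, hbwd _ c hl⟩

theorem IsSPBisim.sUnion {𝓡 : Set (Set (Multiset (S × S)))} (h𝓡 : ∀ R ∈ 𝓡, N.IsSPBisim R) :
    N.IsSPBisim (⋃₀ 𝓡) := by
  refine isSPBisim_iff.2 ⟨.sUnion fun R hR ↦ (isSPBisim_iff.1 (h𝓡 R hR)).1, ?_⟩
  rw [converse_sUnion]
  exact .sUnion (Set.forall_mem_image.2 fun R hR ↦ (isSPBisim_iff.1 (h𝓡 R hR)).2)

theorem isSPBisim_diagonalLinkings : N.IsSPBisim (diagonalLinkings S) := by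
  rw [isSPBisim_iff, converse_diagonalLinkings]
  exact ⟨isSPSim_diagonalLinkings, isSPSim_diagonalLinkings⟩

theorem IsSPBisim.converse (hR : N.IsSPBisim R) : N.IsSPBisim (converse R) := by
  rw [isSPBisim_iff, converse_converse]
  exact (isSPBisim_iff.1 hR).symm

theorem IsSPBisim.comp (hR : N.IsSPBisim R) (hQ : N.IsSPBisim Q) : N.IsSPBisim (comp R Q) := by
  rw [isSPBisim_iff] at hR hQ ⊢
  rw [converse_comp]
  exact ⟨hR.1.comp hQ.1, hQ.2.comp hR.2⟩

theorem SPBisimilar.refl (m : Multiset S) : N.SPBisimilar m m :=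
  ⟨diagonalLinkings S, isSPBisim_diagonalLinkings, m.map fun s ↦ (s, s),
    Multiset.forall_mem_map_iff.2 fun _ _ ↦ rfl, by simp [pi1], by simp [pi2]⟩

theorem SPBisimilar.symm {m₁ m₂ : Multiset S} : N.SPBisimilar m₁ m₂ → N.SPBisimilar m₂ m₁ := by
  rintro ⟨R, hR, l, hl, rfl, rfl⟩
  exact ⟨converse R, hR.converse, l.map Prod.swap, map_swap_mem_converse.2 hl,
    pi1_map_swap l, pi2_map_swap l⟩

theorem SPBisimilar.trans {m₁ m₂ m₃ : Multiset S} :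
    N.SPBisimilar m₁ m₂ → N.SPBisimilar m₂ m₃ → N.SPBisimilar m₁ m₃ := by
  rintro ⟨R, hR, l₁, hl₁, rfl, rfl⟩ ⟨Q, hQ, l₂, hl₂, hmid, rfl⟩
  obtain ⟨l, hl, hl_fst, hl_snd⟩ := exists_mem_comp hl₁ hl₂ hmid.symm
  exact ⟨comp R Q, hR.comp hQ, l, hl, hl_fst, hl_snd⟩

end Bisimulation

end PetriNet

theorem sUnion_isSPBisim_and_equivalence_general {S A : Type} [DecidableEq S]
    (N : PetriNet S A) :
    N.IsSPBisim (⋃₀ {R | N.IsSPBisim R}) ∧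
    (∀ R, N.IsSPBisim R → R ⊆ ⋃₀ {R | N.IsSPBisim R}) ∧
    Equivalence N.SPBisimilar :=
  ⟨.sUnion fun _ hR ↦ hR, fun _ hR ↦ Set.subset_sUnion_of_mem hR, .refl, .symm, .trans⟩

/-- the union of all structure-preserving bisimulations on a net
is itself a structure-preserving bisimulation (hence the largest one), and
structure-preserving bisimilarity `~sp` is an equivalence relation on
markings. -/
theorem sUnion_isSPBisim_and_equivalence {S A : Type} [DecidableEq S]
    [Countable S] [Finite A] (N : PetriNet S A) :
    N.IsSPBisim (⋃₀ {R | N.IsSPBisim R}) ∧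
    (∀ R, N.IsSPBisim R → R ⊆ ⋃₀ {R | N.IsSPBisim R}) ∧
    Equivalence N.SPBisimilar := by
  exact sUnion_isSPBisim_and_equivalence_general N
end

section
/- For every labeled P/T Petri net N = (S, A, T): if R is a structure-preserving bisimulation on N, then R matches steps, i.e., for all l ∈ R and c ⊆ l: (1) for every step G1 with •G1 = π1(c) there exist a step G2 with ℓ(G1) = ℓ(G2) and •G2 = π2(c), and a linking c̄ with π1(c̄) = G1•, π2(c̄) = G2•, and (l ⊖ c) ⊕ c̄ ∈ R; (2) symmetrically for every step G2 with •G2 = π2(c). Consequently, if R1 is an sp-bisimulation then {(π1(l), π2(l)) | l ∈ R1} is a step bisimulation, so structure-preserving bisimilarity implies step bisimilarity. -/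
namespace PetriNet

variable {S A : Type} [DecidableEq S]

/-- A step of `N`: a finite nonempty multiset of transitions of `N`. -/
def IsStep (N : PetriNet S A) (G : Multiset (Multiset S × A × Multiset S)) : Prop :=
  G ≠ 0 ∧ ∀ t ∈ G, t ∈ N.T

/-- Preset of a step: `•G = ⊕_t G(t)·(•t)`. -/
def stepPre (G : Multiset (Multiset S × A × Multiset S)) : Multiset S :=
  (G.map (fun t => t.1)).sum

/-- Postset of a step: `G• = ⊕_t G(t)·(t•)`. -/
def stepPost (G : Multiset (Multiset S × A × Multiset S)) : Multiset S :=
  (G.map (fun t => t.2.2)).sum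

/-- Label of a step: the multiset of labels of its transitions. -/
def stepLab (G : Multiset (Multiset S × A × Multiset S)) : Multiset A :=
  G.map (fun t => t.2.1)

/-- `N.StepFires m G m'`: the step `G` is enabled at `m` (`•G ⊆ m`) and its
firing produces `m' = (m ⊖ •G) ⊕ G•`. -/
def StepFires (N : PetriNet S A) (m : Multiset S)
    (G : Multiset (Multiset S × A × Multiset S)) (m' : Multiset S) : Prop :=
  N.IsStep G ∧ stepPre G ≤ m ∧ m' = m - stepPre G + stepPost G

/-- Step bisimulation. -/
def IsStepBisim (N : PetriNet S A) (R : Set (Multiset S × Multiset S)) : Prop :=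
  ∀ mm ∈ R,
    (∀ G1 m1', N.StepFires mm.1 G1 m1' →
      ∃ G2 m2', N.StepFires mm.2 G2 m2' ∧ stepLab G1 = stepLab G2 ∧ (m1', m2') ∈ R) ∧
    (∀ G2 m2', N.StepFires mm.2 G2 m2' →
      ∃ G1 m1', N.StepFires mm.1 G1 m1' ∧ stepLab G1 = stepLab G2 ∧ (m1', m2') ∈ R)

/-- Step bisimilarity. -/
def StepBisimilar (N : PetriNet S A) (m1 m2 : Multiset S) : Prop :=
  ∃ R, N.IsStepBisim R ∧ (m1, m2) ∈ R

end PetriNet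

/-!
A step is matched by matching its transitions one after the other. If the preset of a step splits
as `•t ⊕ •G = π1(c)`, then `c` itself splits as `c₁ ⊕ c₂` with `π1(c₁) = •t` and `π1(c₂) = •G`.
Matching `t` on `c₁` replaces `c₁` by new links and leaves `c₂` in the linking, so `G` can still be
matched on `c₂`. The new links are never consumed: the transitions of a step are matched
concurrently, although the argument treats them sequentially.
-/

theorem multiset_map_eq_add_iff_s7 {α β : Type*} {f : α → β} {c : Multiset α} {a b : Multiset β} :
    c.map f = a + b ↔ ∃ c₁ c₂, c₁.map f = a ∧ c₂.map f = b ∧ c = c₁ + c₂ := by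
  rw [← Multiset.rel_eq, Multiset.rel_map_left, Multiset.rel_add_right]
  simp only [← Multiset.rel_map_left, Multiset.rel_eq]

namespace PetriNet

variable {S A : Type} {L : Type*} {N : PetriNet S A} {f g : L → S} {R : Set (Multiset L)}

theorem stepPre_cons (t : Multiset S × A × Multiset S)
    (G : Multiset (Multiset S × A × Multiset S)) :
    stepPre (t ::ₘ G) = t.1 + stepPre G := by
  simp only [stepPre, Multiset.map_cons, Multiset.sum_cons]

theorem stepPost_cons (t : Multiset S × A × Multiset S)
    (G : Multiset (Multiset S × A × Multiset S)) :
    stepPost (t ::ₘ G) = t.2.2 + stepPost G := by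
  simp only [stepPost, Multiset.map_cons, Multiset.sum_cons]

theorem stepLab_cons (t : Multiset S × A × Multiset S)
    (G : Multiset (Multiset S × A × Multiset S)) :
    stepLab (t ::ₘ G) = t.2.1 ::ₘ stepLab G :=
  Multiset.map_cons ..

theorem stepLab_eq_zero_iff {G : Multiset (Multiset S × A × Multiset S)} :
    stepLab G = 0 ↔ G = 0 :=
  Multiset.map_eq_zero

/-- One direction of the transfer property for single transitions: whatever `N` can do on the
`f`-ends of some links of a linking in `R`, it can do on their `g`-ends. Links form an arbitrary
type `L` with endpoint maps `f` and `g`, so that `(π1, π2)` and `(π2, π1)` are both instances. -/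
def MatchesTransitions [DecidableEq L] (N : PetriNet S A) (f g : L → S)
    (R : Set (Multiset L)) : Prop :=
  ∀ l ∈ R, ∀ c ≤ l, ∀ t ∈ N.T, t.1 = c.map f →
    ∃ t' ∈ N.T, t'.2.1 = t.2.1 ∧ t'.1 = c.map g ∧
      ∃ cb : Multiset L, cb.map f = t.2.2 ∧ cb.map g = t'.2.2 ∧ l - c + cb ∈ R

/-- One direction of the transfer property for steps, with the same encoding of links as
`MatchesTransitions`. -/
def MatchesSteps [DecidableEq L] (N : PetriNet S A) (f g : L → S) (R : Set (Multiset L)) : Prop :=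
  ∀ l ∈ R, ∀ c ≤ l, ∀ G, N.IsStep G → stepPre G = c.map f →
    ∃ G', N.IsStep G' ∧ stepLab G = stepLab G' ∧ stepPre G' = c.map g ∧
      ∃ cb : Multiset L, cb.map f = stepPost G ∧ cb.map g = stepPost G' ∧ l - c + cb ∈ R

theorem MatchesTransitions.exists_add_mem [DecidableEq L] (h : N.MatchesTransitions f g R)
    {r c : Multiset L} (hrc : r + c ∈ R) {t : Multiset S × A × Multiset S} (ht : t ∈ N.T)
    (hpre : t.1 = c.map f) :
    ∃ t' ∈ N.T, t'.2.1 = t.2.1 ∧ t'.1 = c.map g ∧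
      ∃ cb : Multiset L, cb.map f = t.2.2 ∧ cb.map g = t'.2.2 ∧ r + cb ∈ R := by
  simpa only [Multiset.add_sub_cancel_right] using
    h (r + c) hrc c (Multiset.le_add_left c r) t ht hpre

-- The remainder `r` stands for `l ⊖ c`; it varies because matching a transition adds links to it.
theorem MatchesTransitions.exists_multiset_add_mem [DecidableEq L]
    (h : N.MatchesTransitions f g R) {G : Multiset (Multiset S × A × Multiset S)}
    (hG : ∀ t ∈ G, t ∈ N.T) {r c : Multiset L} (hrc : r + c ∈ R) (hpre : stepPre G = c.map f) :
    ∃ G', (∀ t ∈ G', t ∈ N.T) ∧ stepLab G = stepLab G' ∧ stepPre G' = c.map g ∧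
      ∃ cb : Multiset L, cb.map f = stepPost G ∧ cb.map g = stepPost G' ∧ r + cb ∈ R := by
  induction G using Multiset.induction_on generalizing r c with
  | empty =>
    obtain rfl : c = 0 := Multiset.map_eq_zero.1 hpre.symm
    exact ⟨0, by simp, rfl, rfl, 0, rfl, rfl, hrc⟩
  | cons t G ih =>
    obtain ⟨ht, hG⟩ := Multiset.forall_mem_cons.1 hG
    rw [stepPre_cons, eq_comm, multiset_map_eq_add_iff_s7] at hpre
    obtain ⟨c₁, c₂, hpre₁, hpre₂, rfl⟩ := hpre
    have hrc₁ : (r + c₂) + c₁ ∈ R := by rwa [add_assoc, add_comm c₂]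
    obtain ⟨t', ht', hlab₁, hpre₁', cb₁, hf₁, hg₁, hR₁⟩ := h.exists_add_mem hrc₁ ht hpre₁.symm
    have hrc₂ : (r + cb₁) + c₂ ∈ R := by rwa [add_right_comm]
    obtain ⟨G', hG', hlab₂, hpre₂', cb₂, hf₂, hg₂, hR₂⟩ := ih hG hrc₂ hpre₂.symm
    refine ⟨t' ::ₘ G', Multiset.forall_mem_cons.2 ⟨ht', hG'⟩, ?_, ?_, cb₁ + cb₂, ?_, ?_, ?_⟩
    · rw [stepLab_cons, stepLab_cons, hlab₁, hlab₂]
    · rw [stepPre_cons, Multiset.map_add, hpre₁', hpre₂']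
    · rw [stepPost_cons, Multiset.map_add, hf₁, hf₂]
    · rw [stepPost_cons, Multiset.map_add, hg₁, hg₂]
    · rwa [← add_assoc]

theorem MatchesTransitions.matchesSteps [DecidableEq L] (h : N.MatchesTransitions f g R) :
    N.MatchesSteps f g R := by
  intro l hl c hc G hG hpre
  have hlc : l - c + c ∈ R := by rwa [Multiset.sub_add_cancel hc]
  obtain ⟨G', hG', hlab, hmatch⟩ := h.exists_multiset_add_mem hG.2 hlc hpre
  have hne : G' ≠ 0 := by
    rw [Ne, ← stepLab_eq_zero_iff, ← hlab, stepLab_eq_zero_iff]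
    exact hG.1
  exact ⟨G', ⟨hne, hG'⟩, hlab, hmatch⟩

theorem MatchesSteps.exists_stepFires [DecidableEq S] [DecidableEq L] (h : N.MatchesSteps f g R)
    {l : Multiset L} (hl : l ∈ R) {G : Multiset (Multiset S × A × Multiset S)} {m' : Multiset S}
    (hfire : N.StepFires (l.map f) G m') :
    ∃ G', ∃ l' ∈ R, N.StepFires (l.map g) G' (l'.map g) ∧ stepLab G = stepLab G' ∧
      l'.map f = m' := by
  obtain ⟨hG, hle, rfl⟩ := hfire
  obtain ⟨m, hm⟩ := Multiset.le_iff_exists_add.1 hle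
  obtain ⟨c, r, hc, -, rfl⟩ := multiset_map_eq_add_iff_s7.1 hm
  obtain ⟨G', hG', hlab, hpre', cb, hf, hg, hR⟩ :=
    h (c + r) hl c (Multiset.le_add_right c r) G hG hc.symm
  rw [add_tsub_cancel_left] at hR
  refine ⟨G', r + cb, hR, ⟨hG', ?_, ?_⟩, hlab, ?_⟩
  · rw [hpre', Multiset.map_add]
    exact Multiset.le_add_right _ _
  · rw [hpre', ← hg, Multiset.map_add, Multiset.map_add, add_tsub_cancel_left]
  · rw [← hc, ← hf, Multiset.map_add, Multiset.map_add, add_tsub_cancel_left]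

section Bisimulation

variable [DecidableEq S] {R : Set (Multiset (S × S))}

theorem IsSPBisim.matchesTransitions (hR : N.IsSPBisim R) :
    N.MatchesTransitions Prod.fst Prod.snd R :=
  fun l hl c hc => (hR l hl c hc).1

theorem IsSPBisim.matchesTransitions_swap (hR : N.IsSPBisim R) :
    N.MatchesTransitions Prod.snd Prod.fst R := by
  intro l hl c hc t₂ ht₂ hpre
  obtain ⟨t₁, ht₁, hlab, hpre₁, cb, h₁, h₂, hmem⟩ := (hR l hl c hc).2 t₂ ht₂ hpre
  exact ⟨t₁, ht₁, hlab, hpre₁, cb, h₂, h₁, hmem⟩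

theorem IsSPBisim.isStepBisim (hR : N.IsSPBisim R) :
    N.IsStepBisim {mm | ∃ l ∈ R, pi1 l = mm.1 ∧ pi2 l = mm.2} := by
  rintro ⟨_, _⟩ ⟨l, hl, rfl, rfl⟩
  constructor
  · intro G₁ m₁' hfire
    obtain ⟨G₂, l', hl', hfire', hlab, hm₁'⟩ :=
      hR.matchesTransitions.matchesSteps.exists_stepFires hl hfire
    exact ⟨G₂, pi2 l', hfire', hlab, l', hl', hm₁', rfl⟩
  · intro G₂ m₂' hfire
    obtain ⟨G₁, l', hl', hfire', hlab, hm₂'⟩ :=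
      hR.matchesTransitions_swap.matchesSteps.exists_stepFires hl hfire
    exact ⟨G₁, pi1 l', hfire', hlab.symm, l', hl', rfl, hm₂'⟩

theorem SPBisimilar.stepBisimilar {m₁ m₂ : Multiset S} (h : N.SPBisimilar m₁ m₂) :
    N.StepBisimilar m₁ m₂ :=
  let ⟨_, hR, hl⟩ := h
  ⟨_, hR.isStepBisim, hl⟩

end Bisimulation

end PetriNet

open PetriNet in
theorem spBisim_matches_steps_general {S A : Type} [DecidableEq S] (N : PetriNet S A) :
    (∀ R, N.IsSPBisim R → ∀ l ∈ R, ∀ c ≤ l,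
      (∀ G1, N.IsStep G1 → stepPre G1 = pi1 c →
        ∃ G2, N.IsStep G2 ∧ stepLab G1 = stepLab G2 ∧ stepPre G2 = pi2 c ∧
          ∃ cb : Multiset (S × S),
            pi1 cb = stepPost G1 ∧ pi2 cb = stepPost G2 ∧ l - c + cb ∈ R) ∧
      (∀ G2, N.IsStep G2 → stepPre G2 = pi2 c →
        ∃ G1, N.IsStep G1 ∧ stepLab G1 = stepLab G2 ∧ stepPre G1 = pi1 c ∧
          ∃ cb : Multiset (S × S),
            pi1 cb = stepPost G1 ∧ pi2 cb = stepPost G2 ∧ l - c + cb ∈ R)) ∧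
    (∀ R1, N.IsSPBisim R1 →
      N.IsStepBisim {mm | ∃ l ∈ R1, pi1 l = mm.1 ∧ pi2 l = mm.2}) ∧
    (∀ m1 m2, N.SPBisimilar m1 m2 → N.StepBisimilar m1 m2) := by
  refine ⟨fun R hR l hl c hc => ⟨hR.matchesTransitions.matchesSteps l hl c hc, ?_⟩,
    fun _ hR => hR.isStepBisim, fun _ _ h => h.stepBisimilar⟩
  intro G₂ hG₂ hpre
  obtain ⟨G₁, hG₁, hlab, hpre₁, cb, h₂, h₁, hmem⟩ :=
    hR.matchesTransitions_swap.matchesSteps l hl c hc G₂ hG₂ hpre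
  exact ⟨G₁, hG₁, hlab.symm, hpre₁, cb, h₁, h₂, hmem⟩

open PetriNet in
/-- a structure-preserving bisimulation matches steps, i.e., for
all `l ∈ R` and `c ⊆ l`, every step `G1` with `•G1 = π1(c)` is matched by a
step `G2` with the same label multiset, `•G2 = π2(c)`, and a linking `c̄`
projecting on the two postsets with `(l ⊖ c) ⊕ c̄ ∈ R` (and symmetrically);
consequently `{(π1(l), π2(l)) | l ∈ R1}` is a step bisimulation for every
sp-bisimulation `R1`, so structure-preserving bisimilarity implies step
bisimilarity. -/
theorem spBisim_matches_steps {S A : Type} [DecidableEq S] [Countable S]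
    [Finite A] (N : PetriNet S A) :
    (∀ R, N.IsSPBisim R → ∀ l ∈ R, ∀ c ≤ l,
      (∀ G1, N.IsStep G1 → stepPre G1 = pi1 c →
        ∃ G2, N.IsStep G2 ∧ stepLab G1 = stepLab G2 ∧ stepPre G2 = pi2 c ∧
          ∃ cb : Multiset (S × S),
            pi1 cb = stepPost G1 ∧ pi2 cb = stepPost G2 ∧ l - c + cb ∈ R) ∧
      (∀ G2, N.IsStep G2 → stepPre G2 = pi2 c →
        ∃ G1, N.IsStep G1 ∧ stepLab G1 = stepLab G2 ∧ stepPre G1 = pi1 c ∧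
          ∃ cb : Multiset (S × S),
            pi1 cb = stepPost G1 ∧ pi2 cb = stepPost G2 ∧ l - c + cb ∈ R)) ∧
    (∀ R1, N.IsSPBisim R1 →
      N.IsStepBisim {mm | ∃ l ∈ R1, pi1 l = mm.1 ∧ pi2 l = mm.2}) ∧
    (∀ m1 m2, N.SPBisimilar m1 m2 → N.StepBisimilar m1 m2) :=
  spBisim_matches_steps_general N
end

section
/- Given a P/T net system N(m0) = (S, A, T, m0), if N(m0) is dynamically reduced (equal to its dynamically reachable subnet), then it is also statically reduced (equal to its statically reachable subnet). -/
namespace PetriNet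

variable {S A : Type} [DecidableEq S]

/-- `N.Fires m t m'`: transition `t` of `N` is enabled at marking `m`
(`•t ⊆ m`) and its firing produces `m' = (m ⊖ •t) ⊕ t•`. -/
def Fires (N : PetriNet S A) (m : Multiset S)
    (t : Multiset S × A × Multiset S) (m' : Multiset S) : Prop :=
  t ∈ N.T ∧ t.1 ≤ m ∧ m' = m - t.1 + t.2.2

/-- The set `[m0⟩` of markings (dynamically) reachable from `m0`. -/
def Reach (N : PetriNet S A) (m0 : Multiset S) : Set (Multiset S) :=
  {m | Relation.ReflTransGen (fun x y => ∃ t, N.Fires x t y) m0 m}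

/-- Places of the dynamically reachable subnet:
`S' = {s | ∃ m ∈ [m0⟩, m(s) ≥ 1}`. -/
def dynPlaces (N : PetriNet S A) (m0 : Multiset S) : Set S :=
  {s | ∃ m ∈ N.Reach m0, s ∈ m}

/-- Transitions of the dynamically reachable subnet:
`T' = {t ∈ T | ∃ m ∈ [m0⟩, m[t⟩}`. -/
def dynTrans (N : PetriNet S A) (m0 : Multiset S) :
    Set (Multiset S × A × Multiset S) :=
  {t | t ∈ N.T ∧ ∃ m ∈ N.Reach m0, t.1 ≤ m}

/-- Labels of the dynamically reachable subnet: `A' = {ℓ(t) | t ∈ T'}`. -/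
def dynLabs (N : PetriNet S A) (m0 : Multiset S) : Set A :=
  {a | ∃ t ∈ N.dynTrans m0, t.2.1 = a}

/-- `t` is statically enabled by the set `S1` of places: `dom(•t) ⊆ S1`. -/
def statEnabled (N : PetriNet S A) (t : Multiset S × A × Multiset S)
    (S1 : Set S) : Prop :=
  ∀ s ∈ t.1, s ∈ S1

/-- One step of static reachability: `S1 ⟹t S2` for some `t ∈ T` with
`S1⟦t⟩`, `dom(t•) ⊄ S1` and `S2 = S1 ∪ dom(t•)`. -/
def statStep (N : PetriNet S A) (S1 S2 : Set S) : Prop :=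
  ∃ t ∈ N.T, N.statEnabled t S1 ∧ ¬ (∀ s ∈ t.2.2, s ∈ S1) ∧
    S2 = S1 ∪ {s | s ∈ t.2.2}

/-- Static reachability `⟹*`: reflexive-transitive closure of `statStep`. -/
def StatReach (N : PetriNet S A) : Set S → Set S → Prop :=
  Relation.ReflTransGen N.statStep

/-- `Sk = ⟦dom(m0)⟩`, the largest set of places statically reachable from
`dom(m0)`: `dom(m0) ⟹* Sk` and every transition statically enabled at `Sk`
has `dom(t•) ⊆ Sk`. -/
def IsStatClosure (N : PetriNet S A) (m0 : Multiset S) (Sk : Set S) : Prop :=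
  N.StatReach {s | s ∈ m0} Sk ∧
  ∀ t ∈ N.T, N.statEnabled t Sk → ∀ s ∈ t.2.2, s ∈ Sk

/-- Transitions of the statically reachable subnet: `T'' = {t ∈ T | Sk⟦t⟩}`. -/
def statTrans (N : PetriNet S A) (Sk : Set S) :
    Set (Multiset S × A × Multiset S) :=
  {t | t ∈ N.T ∧ N.statEnabled t Sk}

/-- Labels of the statically reachable subnet: `A'' = {ℓ(t) | t ∈ T''}`. -/
def statLabs (N : PetriNet S A) (Sk : Set S) : Set A :=
  {a | ∃ t ∈ N.statTrans Sk, t.2.1 = a}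

end PetriNet

/-!
A set of places closed under static firing confines all tokens: if it contains every place
marked by `m`, then every transition enabled at `m` is statically enabled by it, hence puts its
tokens back into the set. By induction along firing sequences, the dynamically reachable subnet
is contained in the statically reachable one.
-/

namespace PetriNet

section Static

variable {S A : Type} {N : PetriNet S A} {m₀ : Multiset S} {X Y : Set S}

/-- Sets of places closed under static firing: the postset of each transition statically enabled
by `X` lies in `X`. This is the maximality clause of `IsStatClosure` on its own, without
static reachability from an initial marking. -/
def IsStatClosed (N : PetriNet S A) (X : Set S) : Prop :=
  ∀ t ∈ N.T, N.statEnabled t X → ∀ s ∈ t.2.2, s ∈ X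

theorem statStep.subset (h : N.statStep X Y) : X ⊆ Y := by
  obtain ⟨t, _, _, _, rfl⟩ := h
  exact Set.subset_union_left

theorem StatReach.subset (h : N.StatReach X Y) : X ⊆ Y := by
  induction h with
  | refl => exact subset_rfl
  | tail _ hstep ih => exact ih.trans hstep.subset

theorem IsStatClosure.isStatClosed (h : N.IsStatClosure m₀ X) : N.IsStatClosed X :=
  h.2

theorem IsStatClosure.support_subset (h : N.IsStatClosure m₀ X) : {s | s ∈ m₀} ⊆ X :=
  h.1.subset

theorem statEnabled_of_le {t : Multiset S × A × Multiset S} {m : Multiset S}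
    (hm : {s | s ∈ m} ⊆ X) (ht : t.1 ≤ m) : N.statEnabled t X :=
  fun _ hs => hm (Multiset.mem_of_le ht hs)

theorem statTrans_univ (N : PetriNet S A) : N.statTrans Set.univ = N.T :=
  Set.ext fun _ => and_iff_left fun s _ => Set.mem_univ s

end Static

section Dynamic

variable {S A : Type} [DecidableEq S] {N : PetriNet S A} {m₀ : Multiset S} {X : Set S}

theorem IsStatClosed.support_subset_of_fires (hX : N.IsStatClosed X)
    {t : Multiset S × A × Multiset S} {m m' : Multiset S} (hm : {s | s ∈ m} ⊆ X)
    (h : N.Fires m t m') : {s | s ∈ m'} ⊆ X := by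
  obtain ⟨htT, hle, rfl⟩ := h
  intro s hs
  rcases Multiset.mem_add.1 hs with hrest | hpost
  · exact hm (Multiset.mem_of_le (Multiset.sub_le_self m t.1) hrest)
  · exact hX t htT (statEnabled_of_le hm hle) s hpost

theorem IsStatClosed.support_subset_of_mem_reach (hX : N.IsStatClosed X)
    (h₀ : {s | s ∈ m₀} ⊆ X) {m : Multiset S} (hm : m ∈ N.Reach m₀) : {s | s ∈ m} ⊆ X := by
  induction hm with
  | refl => exact h₀
  | tail _ hstep ih =>
    obtain ⟨t, ht⟩ := hstep
    exact hX.support_subset_of_fires ih ht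

theorem IsStatClosed.dynPlaces_subset (hX : N.IsStatClosed X) (h₀ : {s | s ∈ m₀} ⊆ X) :
    N.dynPlaces m₀ ⊆ X := by
  rintro s ⟨m, hm, hs⟩
  exact hX.support_subset_of_mem_reach h₀ hm hs

theorem IsStatClosed.dynTrans_subset_statTrans (hX : N.IsStatClosed X) (h₀ : {s | s ∈ m₀} ⊆ X) :
    N.dynTrans m₀ ⊆ N.statTrans X := by
  rintro t ⟨htT, m, hm, hle⟩
  exact ⟨htT, statEnabled_of_le (hX.support_subset_of_mem_reach h₀ hm) hle⟩

theorem IsStatClosed.dynLabs_subset_statLabs (hX : N.IsStatClosed X) (h₀ : {s | s ∈ m₀} ⊆ X) :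
    N.dynLabs m₀ ⊆ N.statLabs X :=
  Set.image_mono (hX.dynTrans_subset_statTrans h₀)

end Dynamic

end PetriNet

theorem dynReduced_implies_statReduced_general {S A : Type} [DecidableEq S]
    (N : PetriNet S A) (m0 : Multiset S) (Sk : Set S) (hSk : N.IsStatClosure m0 Sk)
    (hS : N.dynPlaces m0 = Set.univ) (hA : N.dynLabs m0 = Set.univ) :
    Sk = Set.univ ∧ N.statTrans Sk = N.T ∧ N.statLabs Sk = Set.univ := by
  have hclosed : N.IsStatClosed Sk := hSk.isStatClosed
  have hm0 : {s | s ∈ m0} ⊆ Sk := hSk.support_subset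
  have hplaces : Sk = Set.univ :=
    Set.univ_subset_iff.1 (hS ▸ hclosed.dynPlaces_subset hm0)
  have htrans : N.statTrans Sk = N.T := by
    rw [hplaces, PetriNet.statTrans_univ]
  have hlabs : N.statLabs Sk = Set.univ :=
    Set.univ_subset_iff.1 (hA ▸ hclosed.dynLabs_subset_statLabs hm0)
  exact ⟨hplaces, htrans, hlabs⟩

/-- if a P/T net system `N(m0)` is dynamically reduced (it equals
its dynamically reachable subnet), then it is also statically reduced (it
equals its statically reachable subnet). -/
theorem dynReduced_implies_statReduced {S A : Type} [DecidableEq S]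
    [Countable S] [Finite A] (N : PetriNet S A) (m0 : Multiset S)
    (Sk : Set S) (hSk : N.IsStatClosure m0 Sk)
    (hS : N.dynPlaces m0 = Set.univ)
    (hT : N.dynTrans m0 = N.T)
    (hA : N.dynLabs m0 = Set.univ) :
    Sk = Set.univ ∧ N.statTrans Sk = N.T ∧ N.statLabs Sk = Set.univ := by
  exact dynReduced_implies_statReduced_general N m0 Sk hSk hS hA
end
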